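/- arXiv:1908.01149 — 4 statements merged into one kernel-verified Lean document; each statement's English description precedes it below -/
import Mathlib

section
/- Let (X,d) be a compact metric space and f : X → X a continuous map with a fixed point p ∈ X (f(p) = p). Then (X,f) has the approximate product property and zero topological entropy if and only if (X,f) is uniquely ergodic, i.e. the Dirac measure δ_p is the unique f-invariant Borel probability measure on X. -/
open MeasureTheory Filter Set

section Defs

variable {X : Type*} [MetricSpace X]

/-- `segStart m t k` is the time `s_k` at which the `k`-th orbit segment starts
(indexing from `k = 0`): `s_0 = 0`, `s_{k+1} = s_k + m_k + t_k - 1`. -/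
def segStart (m t : ℕ → ℕ) (k : ℕ) : ℕ :=
  ∑ i ∈ Finset.range k, (m i + t i - 1)

/-- `(δ, ε)`-tracing of the sequence of orbit segments `(C k, m k)` with gaps `t k`
by the point `z`. -/
def Traced (f : X → X) (C : ℕ → X) (m t : ℕ → ℕ) (δ ε : ℝ) (z : X) : Prop :=
  ∀ k : ℕ,
    (((Finset.range (m k)).filter
      (fun j => ε < dist (f^[segStart m t k + j] z) (f^[j] (C k)))).card : ℝ)
      ≤ δ * (m k)

/-- The approximate product property. -/
def ApproxProduct (f : X → X) : Prop :=
  ∀ δ₁ δ₂ ε : ℝ, 0 < δ₁ → 0 < δ₂ → 0 < ε →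
    ∃ M : ℕ, ∀ n : ℕ, M < n → ∀ C : ℕ → X,
      ∃ t : ℕ → ℕ, (∀ k, 0 < t k) ∧ (∀ k, (t k : ℝ) ≤ 1 + δ₁ * n) ∧
        ∃ z : X, Traced f C (fun _ => n) t δ₂ ε z

/-- The strict approximate product property. -/
def StrictApproxProduct (f : X → X) : Prop :=
  ∀ δ ε : ℝ, 0 < δ → 0 < ε →
    ∃ M : ℕ, ∀ n : ℕ, M < n → ∀ C : ℕ → X,
      ∃ t : ℕ → ℕ, (∀ k, 0 < t k) ∧ (∀ k, (t k : ℝ) ≤ 1 + δ * n) ∧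
        ∃ z : X, Traced f C (fun _ => n) t 0 ε z

/-- Maximal cardinality of an `(n, ε)`-separated subset of `K`. -/
noncomputable def sepNum (f : X → X) (K : Set X) (n : ℕ) (ε : ℝ) : ℕ :=
  sSup {c : ℕ | ∃ S : Finset X, ↑S ⊆ K ∧ S.card = c ∧
    ∀ y ∈ S, ∀ y' ∈ S, y ≠ y' → ∃ j < n, ε < dist (f^[j] y) (f^[j] y')}

/-- Entropy of `f` on `K` at scale `ε`:
`h(K, f, ε) = limsup_n (1/n) log s(K, n, ε)`. -/
noncomputable def entScale (f : X → X) (K : Set X) (ε : ℝ) : EReal :=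
  limsup (fun n : ℕ => ((Real.log (sepNum f K n ε) / n : ℝ) : EReal)) atTop

/-- Bowen's topological entropy `h(f) = lim_{ε → 0} h(X, f, ε)`
(the limit is a supremum by monotonicity in `ε`). -/
noncomputable def topEnt (f : X → X) : EReal :=
  ⨆ (ε : ℝ) (_ : (0:ℝ) < ε), entScale f Set.univ ε

/-- Unique ergodicity: there is exactly one `f`-invariant Borel probability measure. -/
def UniquelyErgodic [MeasurableSpace X] (f : X → X) : Prop :=
  ∃! μ : Measure X, IsProbabilityMeasure μ ∧ Measure.map f μ = μ

/-- Minimality: every orbit is dense. -/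
def MinimalSystem (f : X → X) : Prop :=
  ∀ x : X, Dense (Set.range fun n => f^[n] x)

/-!
Both sides of the equivalence say that all orbits spend asymptotically all of their time near `p`,
uniformly in the initial point. If they do not, a limit of empirical measures along bad orbit
segments is an invariant measure other than `δ_p`; if they do, an invariant measure charges no set
bounded away from `p`.

If orbits concentrate at `p`, then `p` itself traces every sequence of long orbit segments, and the
entropy vanishes because all itineraries are Hamming-close to a constant word.

If they do not, some long orbit segment of a point `x` is far from `p` a positive fraction `c` of
its length `n`. For each word in `{0, 1}^K` trace the corresponding concatenation of segments of
`p` and of `x`. The gaps may depend on the word, so the segments of two tracing points need not be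
aligned; but gaps much shorter than `c * n` are recovered up to an error `L ≤ c * n / 2` from a
sparse binary word (`carryWord`), and there are at most `2 ^ (K / 2)` of those. Words with the same
sparse code have separated tracing points, so at least `2 ^ (K / 2)` orbits are separated by time
`2 * n * K`.
-/

open scoped Finset Topology

/-! ### Words close to a fixed word -/

section Hamming

variable {ι α : Type*} [DecidableEq α]

theorem hammingDist_fin_val (u v : ℕ → α) (n : ℕ) :
    hammingDist (fun i : Fin n => u i) (fun i => v i) = #{j ∈ Finset.range n | u j ≠ v j} := by
  rw [hammingDist, Finset.card_filter, Finset.card_filter,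
    Fin.sum_univ_eq_sum_range (fun j => if u j ≠ v j then 1 else 0)]

variable [Fintype ι]

theorem pow_hammingDist_eq_prod (g o : ι → α) (l : ℝ) :
    l ^ hammingDist g o = ∏ i, if g i = o i then 1 else l := by
  rw [Finset.prod_ite, Finset.prod_const_one, one_mul, Finset.prod_const]
  rfl

variable [Fintype α]

theorem sum_ite_eq_one_le_exp (a : α) {l : ℝ} (hl : 0 ≤ l) :
    ∑ b : α, (if b = a then 1 else l) ≤ Real.exp (Fintype.card α * l) := by
  calc ∑ b : α, (if b = a then 1 else l)
      ≤ ∑ b : α, ((if b = a then 1 else 0) + l) := by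
        gcongr with b
        split_ifs <;> linarith
    _ = Fintype.card α * l + 1 := by
        simp [Finset.sum_add_distrib, add_comm]
    _ ≤ Real.exp (Fintype.card α * l) := Real.add_one_le_exp _

theorem sum_pow_hammingDist_le_exp [DecidableEq ι] (o : ι → α) {l : ℝ} (hl : 0 ≤ l) :
    ∑ g : ι → α, l ^ hammingDist g o ≤ Real.exp (Fintype.card ι * (Fintype.card α * l)) := by
  calc ∑ g : ι → α, l ^ hammingDist g o
      = ∏ i, ∑ b : α, (if b = o i then 1 else l) := by
        simp only [pow_hammingDist_eq_prod, Finset.prod_univ_sum, Fintype.piFinset_univ]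
    _ ≤ ∏ _i : ι, Real.exp (Fintype.card α * l) := by
        gcongr with i
        exact sum_ite_eq_one_le_exp (o i) hl
    _ = Real.exp (Fintype.card ι * (Fintype.card α * l)) := by
        rw [Finset.prod_const, Finset.card_univ, ← Real.exp_nat_mul]

theorem card_hammingDist_le_le_exp [DecidableEq ι] (o : ι → α) (b : ℝ) {l : ℝ} (hl : 0 < l)
    (hl1 : l ≤ 1) :
    (#{g : ι → α | (hammingDist g o : ℝ) ≤ b} : ℝ) ≤
      Real.exp (Fintype.card ι * (Fintype.card α * l) - b * Real.log l) := by
  have markov : (#{g : ι → α | (hammingDist g o : ℝ) ≤ b} : ℝ) * l ^ b ≤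
      ∑ g : ι → α, l ^ hammingDist g o := by
    rw [← nsmul_eq_mul]
    refine (Finset.card_nsmul_le_sum _ (fun g => l ^ hammingDist g o) _ fun g hg => ?_).trans
      (Finset.sum_le_univ_sum_of_nonneg fun g => by positivity)
    rw [← Real.rpow_natCast]
    exact Real.rpow_le_rpow_of_exponent_ge hl hl1 (Finset.mem_filter.1 hg).2
  rw [Real.exp_sub, le_div_iff₀ (Real.exp_pos _), mul_comm b, ← Real.rpow_def_of_pos hl]
  exact markov.trans (sum_pow_hammingDist_le_exp o hl.le)

theorem exists_forall_card_hammingDist_le_le_exp (α : Type*) [Fintype α] [DecidableEq α] {η : ℝ}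
    (hη : 0 < η) :
    ∃ δ : ℝ, 0 < δ ∧ δ ≤ 1 ∧ ∀ (n : ℕ) (o : Fin n → α),
      (#{g : Fin n → α | (hammingDist g o : ℝ) ≤ δ * n} : ℝ) ≤ Real.exp (η * n) := by
  obtain ⟨l, ⟨hlη, hl1⟩, hl⟩ : ∃ l : ℝ, (Fintype.card α * l < η / 2 ∧ l < 1) ∧ 0 < l := by
    have hlim : Tendsto (fun l : ℝ => Fintype.card α * l) (𝓝[>] 0) (𝓝 0) := by
      simpa using (tendsto_nhdsWithin_of_tendsto_nhds (tendsto_id (x := 𝓝 0))).const_mul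
        (Fintype.card α : ℝ)
    exact ((hlim.eventually_lt_const (half_pos hη)).and
      (eventually_nhdsWithin_of_eventually_nhds (eventually_lt_nhds one_pos))).and
      self_mem_nhdsWithin |>.exists
  have hlog : 0 < -Real.log l := neg_pos.2 (Real.log_neg hl hl1)
  refine ⟨min 1 (η / 2 / -Real.log l), by positivity, min_le_left _ _, fun n o => ?_⟩
  set δ := min 1 (η / 2 / -Real.log l)
  have hδ : δ * -Real.log l ≤ η / 2 := (le_div_iff₀ hlog).1 (min_le_right _ _)
  refine (card_hammingDist_le_le_exp o (δ * n) hl hl1.le).trans (Real.exp_le_exp.2 ?_)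
  calc Fintype.card (Fin n) * (Fintype.card α * l) - δ * n * Real.log l
      = (Fintype.card α * l + δ * -Real.log l) * n := by rw [Fintype.card_fin]; ring
    _ ≤ η * n := by gcongr; linarith

end Hamming

section Carry

/-- The word whose `k`-th letter records whether `D (k + 1)` lies in a later block of length `L`
than `D k`. It is a coarse encoding of a slowly growing sequence `D`: it has few letters `true`,
and it determines `D` up to an error less than `L`. -/
def carryWord (D : ℕ → ℕ) (L K : ℕ) : Fin K → Bool :=
  fun k => decide (D k / L ≠ D (k + 1) / L)

variable {D D' : ℕ → ℕ} {L : ℕ}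

theorem carryWord_eq_of_le {k K : ℕ} (h : carryWord D L K = carryWord D' L K) (hk : k ≤ K) :
    carryWord D L k = carryWord D' L k :=
  funext fun i => congrFun h (i.castLE hk)

theorem hammingDist_carryWord (hL : 0 < L) (h0 : D 0 = 0) (hD : Monotone D)
    (hstep : ∀ k, D (k + 1) ≤ D k + L) (K : ℕ) :
    hammingDist (carryWord D L K) (fun _ => false) = D K / L := by
  have hmono : Monotone fun k => D k / L := fun _ _ hkm => Nat.div_le_div_right (hD hkm)
  have jump_eq_sub : ∀ k, (if decide (D k / L ≠ D (k + 1) / L) ≠ false then 1 else 0) =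
      D (k + 1) / L - D k / L := by
    intro k
    have hlower : D k / L ≤ D (k + 1) / L := hmono k.le_succ
    have hupper : D (k + 1) / L ≤ D k / L + 1 := by
      rw [← Nat.add_div_right _ hL]
      exact Nat.div_le_div_right (hstep k)
    simp only [decide_not, ne_eq, Bool.not_eq_false', decide_eq_true_eq, ite_not]
    split_ifs <;> omega
  unfold carryWord
  rw [hammingDist_fin_val (fun k => decide (D k / L ≠ D (k + 1) / L)) (fun _ => false),
    Finset.card_filter, Finset.sum_congr rfl fun k _ => jump_eq_sub k,
    Finset.sum_range_tsub hmono, h0, Nat.zero_div, Nat.sub_zero]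

theorem le_add_of_carryWord_eq (hL : 0 < L) (h0 : D 0 = 0) (hD : Monotone D)
    (hstep : ∀ k, D (k + 1) ≤ D k + L) (h0' : D' 0 = 0) (hD' : Monotone D')
    (hstep' : ∀ k, D' (k + 1) ≤ D' k + L) {k K : ℕ} (hk : k ≤ K)
    (h : carryWord D L K = carryWord D' L K) : D k ≤ D' k + L := by
  have hdiv : D k / L = D' k / L := by
    rw [← hammingDist_carryWord hL h0 hD hstep, ← hammingDist_carryWord hL h0' hD' hstep',
      carryWord_eq_of_le h hk]
  calc D k ≤ L * (D k / L) + L := (Nat.lt_mul_div_succ _ hL).le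
    _ = L * (D' k / L) + L := by rw [hdiv]
    _ ≤ D' k + L := by gcongr; exact Nat.mul_div_le _ _

end Carry

section FarCount

variable {X : Type*} [PseudoMetricSpace X]

/-- The number of times `j < n` at which the sequences `u` and `v` are more than `ε` apart. -/
noncomputable def farCount (u v : ℕ → X) (ε : ℝ) (n : ℕ) : ℕ :=
  #{j ∈ Finset.range n | ε < dist (u j) (v j)}

theorem farCount_le (u v : ℕ → X) (ε : ℝ) (n : ℕ) : farCount u v ε n ≤ n :=
  (Finset.card_filter_le _ _).trans_eq (Finset.card_range n)

theorem farCount_comm (u v : ℕ → X) (ε : ℝ) (n : ℕ) : farCount u v ε n = farCount v u ε n := by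
  simp only [farCount, dist_comm]

theorem farCount_add_le (u v w : ℕ → X) (ε₁ ε₂ : ℝ) (n : ℕ) :
    farCount u w (ε₁ + ε₂) n ≤ farCount u v ε₁ n + farCount v w ε₂ n := by
  refine (Finset.card_le_card fun j hj => ?_).trans (Finset.card_union_le _ _)
  simp only [Finset.mem_filter, Finset.mem_union] at hj ⊢
  by_contra! hnear
  linarith [dist_triangle (u j) (v j) (w j), hnear.1 hj.1, hnear.2 hj.1, hj.2]

theorem exists_lt_dist_of_farCount_pos {u v : ℕ → X} {ε : ℝ} {n : ℕ} (h : 0 < farCount u v ε n) :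
    ∃ j < n, ε < dist (u j) (v j) := by
  simpa [farCount, Finset.Nonempty] using Finset.card_pos.1 h

theorem count_le_count_add_sub (P : ℕ → Prop) [DecidablePred P] (a b : ℕ) :
    Nat.count P b ≤ Nat.count P a + (b - a) := by
  calc Nat.count P b ≤ Nat.count P (a + (b - a)) := Nat.count_monotone P (by omega)
    _ ≤ Nat.count P a + (b - a) := by
      rw [Nat.count_add]
      gcongr
      exact Nat.count_le _

theorem farCount_const_shift_le (u : ℕ → X) (p : X) (ε : ℝ) (n : ℕ) {s s' L : ℕ}
    (h : s ≤ s' + L) (h' : s' ≤ s + L) :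
    farCount (fun j => u (s' + j)) (fun _ => p) ε n ≤
      farCount (fun j => u (s + j)) (fun _ => p) ε n + L := by
  let P : ℕ → Prop := fun i => ε < dist (u i) p
  have hwindow : ∀ a, farCount (fun j => u (a + j)) (fun _ => p) ε n + Nat.count P a =
      Nat.count P (a + n) := by
    intro a
    rw [Nat.count_add, add_comm, Nat.count_eq_card_filter_range (fun k => P (a + k)), farCount]
  have hstart := count_le_count_add_sub P s' s
  have hend := count_le_count_add_sub P (s + n) (s' + n)
  have := hwindow s
  have := hwindow s'
  omega

-- Otherwise `z'`, and hence `z`, would follow `x` on the window `[s', s' + n)`, of which all but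
-- `L` times belong to the window `[s, s + n)` where `z` stays near `p`.
theorem exists_lt_dist_of_farCount_lt {x z z' : ℕ → X} {p : X} {ε : ℝ} {n s s' L : ℕ}
    (h : s ≤ s' + L) (h' : s' ≤ s + L)
    (hfar : farCount (fun j => z (s + j)) (fun _ => p) ε n +
      farCount (fun j => z' (s' + j)) x ε n + L < farCount x (fun _ => p) (3 * ε) n) :
    ∃ j < n, ε < dist (z (s' + j)) (z' (s' + j)) := by
  apply exists_lt_dist_of_farCount_pos
  have hx := farCount_add_le x (fun j => z' (s' + j)) (fun _ => p) ε (ε + ε) n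
  have hz' := farCount_add_le (fun j => z' (s' + j)) (fun j => z (s' + j)) (fun _ => p) ε ε n
  have hz := farCount_const_shift_le z p ε n h h'
  rw [farCount_comm x fun j => z' (s' + j), show ε + (ε + ε) = 3 * ε by ring] at hx
  rw [farCount_comm (fun j => z' (s' + j)) fun j => z (s' + j)] at hz'
  omega

end FarCount

/-! ### Separated sets and entropy -/

section Separated

variable {X : Type*} [PseudoMetricSpace X] {f : X → X} {n : ℕ} {ε : ℝ}

/-- The relation that `(n, ε)`-separated sets impose on their pairs of distinct points. -/
def OrbitsSeparated (f : X → X) (n : ℕ) (ε : ℝ) (y y' : X) : Prop :=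
  ∃ j < n, ε < dist (f^[j] y) (f^[j] y')

theorem OrbitsSeparated.symm {y y' : X} (h : OrbitsSeparated f n ε y y') :
    OrbitsSeparated f n ε y' y := by
  simpa only [OrbitsSeparated, dist_comm] using h

theorem OrbitsSeparated.ne {y y' : X} (h : OrbitsSeparated f n ε y y') (hε : 0 ≤ ε) : y ≠ y' := by
  rintro rfl
  obtain ⟨j, -, hj⟩ := h
  exact hj.not_ge ((dist_self _).trans_le hε)

/-- The itinerary of length `n` of `x` through the classes of the labelling `φ`. -/
def itinerary {α : Type*} (f : X → X) (φ : X → α) (n : ℕ) (x : X) : Fin n → α :=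
  fun j => φ (f^[j] x)

theorem card_le_of_itinerary_mem {α : Type*} {φ : X → α} (hφ : ∀ a b, φ a = φ b → dist a b ≤ ε)
    {S : Finset X} (hS : (S : Set X).Pairwise (OrbitsSeparated f n ε)) {T : Finset (Fin n → α)}
    (hT : ∀ x ∈ S, itinerary f φ n x ∈ T) : #S ≤ #T := by
  refine Finset.card_le_card_of_injOn (itinerary f φ n) hT fun y hy y' hy' hyy' => ?_
  by_contra hne
  obtain ⟨j, hj, hfar⟩ := hS hy hy' hne
  exact hfar.not_ge (hφ _ _ (congrFun hyy' ⟨j, hj⟩))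

theorem hammingDist_itinerary_le_farCount {α : Type*} [DecidableEq α] {φ : X → α} {o : α} {p : X}
    (hφ : ∀ a, φ a ≠ o → ε < dist a p) (f : X → X) (n : ℕ) (x : X) :
    hammingDist (itinerary f φ n x) (fun _ => o) ≤
      farCount (fun j => f^[j] x) (fun _ => p) ε n := by
  unfold itinerary
  rw [hammingDist_fin_val (fun j => φ (f^[j] x)) (fun _ => o)]
  exact Finset.card_le_card (Finset.monotone_filter_right _ fun j _ => hφ (f^[j] x))

theorem exists_finset_labelling_dist_le [CompactSpace X] (hε : 0 < ε) :
    ∃ (F : Finset X) (φ : X → F), ∀ a b, φ a = φ b → dist a b ≤ ε := by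
  obtain ⟨F, -, hF, hcover⟩ := (isCompact_univ (X := X)).finite_cover_balls (half_pos hε)
  have hcenter : ∀ a : X, ∃ c : hF.toFinset, dist a c < ε / 2 := fun a => by
    simpa using hcover (mem_univ a)
  choose φ hφ using hcenter
  refine ⟨hF.toFinset, φ, fun a b hab => ?_⟩
  linarith [dist_triangle_right a b (φ a), hφ a, hab ▸ hφ b]

end Separated

section Entropy

variable {X : Type*} [MetricSpace X] {f : X → X} {K : Set X} {n : ℕ} {ε : ℝ}

theorem sepNum_le_of_itinerary_mem {α : Type*} {φ : X → α} (hφ : ∀ a b, φ a = φ b → dist a b ≤ ε)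
    {T : Finset (Fin n → α)} (hT : ∀ x ∈ K, itinerary f φ n x ∈ T) : sepNum f K n ε ≤ #T := by
  refine csSup_le ⟨0, ∅, by simp⟩ ?_
  rintro _ ⟨S, hSK, rfl, hS⟩
  exact card_le_of_itinerary_mem hφ hS fun x hx => hT x (hSK hx)

theorem card_le_sepNum [CompactSpace X] (hε : 0 < ε) {S : Finset X} (hSK : ↑S ⊆ K)
    (hS : (S : Set X).Pairwise (OrbitsSeparated f n ε)) : #S ≤ sepNum f K n ε := by
  obtain ⟨F, φ, hφ⟩ := exists_finset_labelling_dist_le (X := X) hε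
  refine le_csSup ⟨#(Finset.univ : Finset (Fin n → F)), ?_⟩ ⟨S, hSK, rfl, hS⟩
  rintro _ ⟨S', -, rfl, hS'⟩
  exact card_le_of_itinerary_mem hφ hS' fun _ _ => Finset.mem_univ _

theorem card_le_sepNum_mul_card [CompactSpace X] (hε : 0 < ε) {W β : Type*} [Fintype W]
    {z : W → X} {code : W → β} {T : Finset β} (hT : ∀ w, code w ∈ T)
    (hsep : ∀ w w', code w = code w' → w ≠ w' → OrbitsSeparated f n ε (z w) (z w')) :
    Fintype.card W ≤ sepNum f univ n ε * #T := by
  classical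
  refine Finset.card_le_mul_card_image_of_maps_to (fun w _ => hT w) _ fun b _ => ?_
  have hfiber : ({w | code w = b} : Set W).Pairwise
      fun w w' => OrbitsSeparated f n ε (z w) (z w') :=
    fun w hw w' hw' => hsep w w' (hw.trans hw'.symm)
  have hinj : InjOn z {w | code w = b} := fun w hw w' hw' hzz' =>
    by_contra fun hne => (hfiber hw hw' hne).ne hε.le hzz'
  rw [← Finset.card_image_of_injOn (f := z) (by simpa using hinj)]
  refine card_le_sepNum hε (subset_univ _) ?_
  simpa using hinj.pairwise_image.2 hfiber

theorem entScale_le_of_sepNum_le_exp {η : ℝ} (hη : 0 ≤ η)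
    (h : ∀ᶠ n : ℕ in atTop, (sepNum f K n ε : ℝ) ≤ Real.exp (η * n)) : entScale f K ε ≤ η := by
  refine limsup_le_of_le (by isBoundedDefault) (h.mono fun n hn => EReal.coe_le_coe_iff.2 ?_)
  refine div_le_of_le_mul₀ (by positivity) hη ?_
  rcases (sepNum f K n ε).eq_zero_or_pos with hzero | hpos
  · rw [hzero, Nat.cast_zero, Real.log_zero]
    positivity
  · exact (Real.log_le_iff_le_exp (Nat.cast_pos.2 hpos)).2 hn

theorem le_entScale_of_exp_le_sepNum {a : ℝ} {N : ℕ} (hN : 0 < N)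
    (h : ∀ k : ℕ, Real.exp (a * k) ≤ sepNum f K (N * k) ε) : (a / N : ℝ) ≤ entScale f K ε := by
  refine le_limsup_of_frequently_le (frequently_atTop.2 fun m => ⟨N * (m + 1), by nlinarith, ?_⟩)
    (by isBoundedDefault)
  have hlog := Real.log_le_log (Real.exp_pos _) (h (m + 1))
  rw [Real.log_exp] at hlog
  rw [EReal.coe_le_coe_iff, le_div_iff₀ (by positivity)]
  refine Eq.trans_le ?_ hlog
  push_cast
  field_simp

theorem entScale_nonneg : 0 ≤ entScale f K ε := by
  refine le_limsup_of_frequently_le (Frequently.of_forall fun n => ?_) (by isBoundedDefault)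
  exact EReal.coe_nonneg.2 (div_nonneg (Real.log_natCast_nonneg _) n.cast_nonneg)

theorem entScale_univ_le_topEnt (f : X → X) (hε : 0 < ε) : entScale f univ ε ≤ topEnt f :=
  le_iSup₂ (f := fun (ε : ℝ) (_ : 0 < ε) => entScale f univ ε) ε hε

theorem topEnt_eq_zero_of_sepNum_le_exp (h : ∀ ε : ℝ, 0 < ε → ∀ η : ℝ, 0 < η →
      ∀ᶠ n : ℕ in atTop, (sepNum f univ n ε : ℝ) ≤ Real.exp (η * n)) : topEnt f = 0 := by
  refine le_antisymm (iSup₂_le fun ε hε => ?_)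
    (entScale_nonneg.trans (entScale_univ_le_topEnt f one_pos))
  refine EReal.le_of_forall_lt_iff_le.1 fun η hη => ?_
  have hη : 0 < η := EReal.coe_pos.1 hη
  exact entScale_le_of_sepNum_le_exp hη.le (h ε hε η hη)

theorem topEnt_pos_of_exp_le_sepNum (hε : 0 < ε) {a : ℝ} (ha : 0 < a) {N : ℕ} (hN : 0 < N)
    (h : ∀ k : ℕ, Real.exp (a * k) ≤ sepNum f univ (N * k) ε) : 0 < topEnt f := by
  have hrate : (0 : EReal) < (a / N : ℝ) := EReal.coe_pos.2 (by positivity)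
  exact hrate.trans_le ((le_entScale_of_exp_le_sepNum hN h).trans (entScale_univ_le_topEnt f hε))

end Entropy

/-! ### Concentration of orbits at a point -/

/-- Every orbit spends asymptotically all of its time near `p`, uniformly in the initial point. -/
def OrbitsConcentrateAt {X : Type*} [PseudoMetricSpace X] (f : X → X) (p : X) : Prop :=
  ∀ δ : ℝ, 0 < δ → ∀ ε : ℝ, 0 < ε → ∀ᶠ n : ℕ in atTop, ∀ x : X,
    (farCount (fun j => f^[j] x) (fun _ => p) ε n : ℝ) ≤ δ * n

namespace OrbitsConcentrateAt

variable {X : Type*} [MetricSpace X] {f : X → X} {p : X}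

theorem approxProduct (h : OrbitsConcentrateAt f p) (hp : f p = p) : ApproxProduct f := by
  intro δ₁ δ₂ ε hδ₁ hδ₂ hε
  obtain ⟨M, hM⟩ := eventually_atTop.1 (h δ₂ hδ₂ ε hε)
  refine ⟨M, fun n hn C => ⟨fun _ => 1, fun _ => one_pos, fun _ => ?_, p, fun k => ?_⟩⟩
  · rw [Nat.cast_one]
    exact le_add_of_nonneg_right (by positivity)
  · simp only [Function.iterate_fixed hp, dist_comm p]
    exact hM n hn.le (C k)

-- Label the ball of radius `ε / 2` about `p` by a single letter: all itineraries are then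
-- Hamming-close to a constant word, so there are few of them.
theorem sepNum_le_exp [CompactSpace X] (h : OrbitsConcentrateAt f p) {ε : ℝ} (hε : 0 < ε) {η : ℝ}
    (hη : 0 < η) : ∀ᶠ n : ℕ in atTop, (sepNum f univ n ε : ℝ) ≤ Real.exp (η * n) := by
  classical
  obtain ⟨F, ψ, hψ⟩ := exists_finset_labelling_dist_le (X := X) hε
  let φ : X → Option F := fun a => if ε / 2 < dist a p then some (ψ a) else none
  have hφ_dist : ∀ a b, φ a = φ b → dist a b ≤ ε := by
    intro a b hab
    by_cases ha : ε / 2 < dist a p <;> by_cases hb : ε / 2 < dist b p <;>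
      simp only [φ, ha, hb, if_true, if_false, Option.some.injEq, reduceCtorEq] at hab
    · exact hψ a b hab
    · linarith [dist_triangle_right a b p]
  have hφ_none : ∀ a, φ a ≠ none → ε / 2 < dist a p := fun a ha => by
    by_contra hnear
    exact ha (if_neg hnear)
  obtain ⟨δ, hδ, -, hcard⟩ := exists_forall_card_hammingDist_le_le_exp (Option F) hη
  filter_upwards [h δ hδ (ε / 2) (half_pos hε)] with n hn
  refine le_trans (Nat.cast_le.2 (sepNum_le_of_itinerary_mem hφ_dist fun x _ => ?_))
    (hcard n fun _ => none)
  rw [Finset.mem_filter_univ]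
  exact (Nat.cast_le.2 (hammingDist_itinerary_le_farCount hφ_none f n x)).trans (hn x)

theorem topEnt_eq_zero [CompactSpace X] (h : OrbitsConcentrateAt f p) : topEnt f = 0 :=
  topEnt_eq_zero_of_sepNum_le_exp fun _ hε _ hη => h.sepNum_le_exp hε hη

end OrbitsConcentrateAt

/-! ### Entropy produced by orbit segments far from a fixed point -/

section Gaps

/-- The total delay caused by the first `k` gaps: a gap `t i = 1` is no gap at all. -/
def gapSum (t : ℕ → ℕ) (k : ℕ) : ℕ :=
  ∑ i ∈ Finset.range k, (t i - 1)

theorem monotone_gapSum (t : ℕ → ℕ) : Monotone (gapSum t) :=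
  monotone_nat_of_le_succ fun k => by
    rw [gapSum, gapSum, Finset.sum_range_succ]
    exact Nat.le_add_right _ _

theorem gapSum_succ_le {t : ℕ → ℕ} {L : ℕ} (ht : ∀ k, t k ≤ 1 + L) (k : ℕ) :
    gapSum t (k + 1) ≤ gapSum t k + L := by
  rw [gapSum, gapSum, Finset.sum_range_succ]
  gcongr
  exact Nat.sub_le_iff_le_add'.2 (ht k)

theorem segStart_const {t : ℕ → ℕ} (ht : ∀ k, 0 < t k) (n k : ℕ) :
    segStart (fun _ => n) t k = k * n + gapSum t k := by
  simp only [segStart, gapSum, Nat.add_sub_assoc (ht _), Finset.sum_add_distrib, Finset.sum_const,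
    Finset.card_range, smul_eq_mul]

theorem cast_gapSum_le {t : ℕ → ℕ} {B : ℝ} (ht : ∀ k, 0 < t k) (hB : ∀ k, (t k : ℝ) ≤ 1 + B)
    (k : ℕ) : (gapSum t k : ℝ) ≤ k * B := by
  rw [gapSum, Nat.cast_sum]
  refine (Finset.sum_le_card_nsmul _ _ B fun i _ => ?_).trans_eq ?_
  · rw [Nat.cast_pred (ht i)]
    linarith [hB i]
  · rw [Finset.card_range, nsmul_eq_mul]

theorem le_one_add_of_cast_le {a L : ℕ} {κ : ℝ} (hκ : κ ≤ 1) (h : (a : ℝ) ≤ 1 + κ * L) :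
    a ≤ 1 + L := by
  have : (a : ℝ) ≤ 1 + L := h.trans (by gcongr; exact mul_le_of_le_one_left (by positivity) hκ)
  exact_mod_cast this

theorem hammingDist_carryWord_gapSum_le {t : ℕ → ℕ} {L : ℕ} {κ : ℝ} (hL : 0 < L) (hκ : κ ≤ 1)
    (ht : ∀ k, 0 < t k) (ht_le : ∀ k, (t k : ℝ) ≤ 1 + κ * L) (K : ℕ) :
    (hammingDist (carryWord (gapSum t) L K) (fun _ => false) : ℝ) ≤ κ * K := by
  rw [hammingDist_carryWord hL rfl (monotone_gapSum t)
    (gapSum_succ_le fun k => le_one_add_of_cast_le hκ (ht_le k))]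
  refine Nat.cast_div_le.trans ((div_le_iff₀ (Nat.cast_pos.2 hL)).2 ?_)
  exact (cast_gapSum_le ht ht_le K).trans_eq (by ring)

end Gaps

section PositiveEntropy

variable {X : Type*} [MetricSpace X] {f : X → X} {p : X} {δ ε : ℝ}

theorem orbitsSeparated_of_traced {C C' : ℕ → X} {m t t' : ℕ → ℕ} {z z' : X} {k L N : ℕ}
    (hp : f p = p) (hz : Traced f C m t δ ε z) (hz' : Traced f C' m t' δ ε z') (hC : C k = p)
    (h : segStart m t k ≤ segStart m t' k + L) (h' : segStart m t' k ≤ segStart m t k + L)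
    (hN : segStart m t' k + m k ≤ N)
    (hfar : 2 * δ * m k + L < farCount (fun j => f^[j] (C' k)) (fun _ => p) (3 * ε) (m k)) :
    OrbitsSeparated f N ε z z' := by
  have hnear : (farCount (fun j => f^[segStart m t k + j] z) (fun _ => p) ε (m k) : ℝ) ≤
      δ * m k := by
    simpa only [Traced, farCount, hC, Function.iterate_fixed hp] using hz k
  have hnear' : (farCount (fun j => f^[segStart m t' k + j] z') (fun j => f^[j] (C' k)) ε (m k) :
      ℝ) ≤ δ * m k := hz' k
  obtain ⟨j, hj, hdist⟩ := exists_lt_dist_of_farCount_lt (z := fun i => f^[i] z)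
    (z' := fun i => f^[i] z') (x := fun i => f^[i] (C' k)) (p := p) (ε := ε) (n := m k) h h' (by
      rw [← Nat.cast_lt (α := ℝ)]
      push_cast
      linarith)
  exact ⟨segStart m t' k + j, by omega, hdist⟩

-- Equal carry words mean almost equal delays, so the two points trace the segments of `p` and of
-- `C' k` over almost the same window of time.
theorem orbitsSeparated_of_carryWord_eq {C C' : ℕ → X} {t t' : ℕ → ℕ} {z z' : X} {n k K L : ℕ}
    (hp : f p = p) (ht : ∀ k, 0 < t k) (ht_le : ∀ k, t k ≤ 1 + L) (ht' : ∀ k, 0 < t' k)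
    (ht_le' : ∀ k, t' k ≤ 1 + L) (hz : Traced f C (fun _ => n) t δ ε z)
    (hz' : Traced f C' (fun _ => n) t' δ ε z') (hC : C k = p) (hk : k < K) (hL : 0 < L)
    (hLn : L ≤ n) (hcarry : carryWord (gapSum t) L K = carryWord (gapSum t') L K)
    (hfar : 2 * δ * n + L < farCount (fun j => f^[j] (C' k)) (fun _ => p) (3 * ε) n) :
    OrbitsSeparated f (2 * n * K) ε z z' := by
  have hgap := le_add_of_carryWord_eq hL rfl (monotone_gapSum t) (gapSum_succ_le ht_le)
    rfl (monotone_gapSum t') (gapSum_succ_le ht_le') hk.le hcarry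
  have hgap' := le_add_of_carryWord_eq hL rfl (monotone_gapSum t') (gapSum_succ_le ht_le')
    rfl (monotone_gapSum t) (gapSum_succ_le ht_le) hk.le hcarry.symm
  refine orbitsSeparated_of_traced hp hz hz' hC (L := L) ?_ ?_ ?_ hfar <;>
    simp only [segStart_const ht, segStart_const ht']
  · omega
  · omega
  · have hdelay : gapSum t' k ≤ k * L := by
      exact_mod_cast cast_gapSum_le (B := L) ht' (fun i => by exact_mod_cast ht_le' i) k
    nlinarith

theorem two_pow_le_sepNum_mul_card [CompactSpace X] (hp : f p = p) (hδ : 0 ≤ δ) (hε : 0 < ε)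
    {x : X} {n L : ℕ} {κ : ℝ} (hL : 0 < L) (hκ : κ ≤ 1)
    (hfar : 2 * δ * n + L < farCount (fun j => f^[j] x) (fun _ => p) (3 * ε) n)
    (htrace : ∀ C : ℕ → X, ∃ t : ℕ → ℕ, (∀ k, 0 < t k) ∧ (∀ k, (t k : ℝ) ≤ 1 + κ * L) ∧
      ∃ z : X, Traced f C (fun _ => n) t δ ε z) (K : ℕ) :
    2 ^ K ≤ sepNum f univ (2 * n * K) ε *
      #{g : Fin K → Bool | (hammingDist g (fun _ => false) : ℝ) ≤ κ * K} := by
  let C : (Fin K → Bool) → ℕ → X := fun w =>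
    Function.extend Fin.val (fun i => if w i then x else p) fun _ => p
  have hC : ∀ w (i : Fin K), C w i = if w i then x else p := fun w i =>
    Fin.val_injective.extend_apply _ _ _
  choose t ht hκt z hz using fun w => htrace (C w)
  have ht_le : ∀ w k, t w k ≤ 1 + L := fun w k => le_one_add_of_cast_le hκ (hκt w k)
  have hLn : L ≤ n := by
    have hle : (farCount (fun j => f^[j] x) (fun _ => p) (3 * ε) n : ℝ) ≤ n :=
      Nat.cast_le.2 (farCount_le _ _ _ _)
    have : (L : ℝ) ≤ n := by linarith [show 0 ≤ 2 * δ * n by positivity]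
    exact_mod_cast this
  have hsep : ∀ w w' (i : Fin K), carryWord (gapSum (t w)) L K = carryWord (gapSum (t w')) L K →
      w i = false → w' i = true → OrbitsSeparated f (2 * n * K) ε (z w) (z w') := by
    intro w w' i hcarry hi hi'
    refine orbitsSeparated_of_carryWord_eq hp (ht w) (ht_le w) (ht w') (ht_le w') (hz w) (hz w')
      (k := i) ?_ i.is_lt hL hLn hcarry ?_
    · simp [hC, hi]
    · simpa [hC, hi'] using hfar
  have hwords : Fintype.card (Fin K → Bool) = 2 ^ K := by simp
  refine hwords ▸ card_le_sepNum_mul_card hε (z := z)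
    (code := fun w => carryWord (gapSum (t w)) L K) (fun w => ?_) fun w w' hcode hne => ?_
  · rw [Finset.mem_filter_univ]
    exact hammingDist_carryWord_gapSum_le hL hκ (ht w) (hκt w) K
  · obtain ⟨i, hi⟩ := Function.ne_iff.1 hne
    cases hwi : w i
    · exact hsep w w' i hcode hwi (by simpa [hwi] using hi.symm)
    · exact (hsep w' w i hcode.symm (by simpa [hwi] using hi.symm) hwi).symm

theorem exp_le_of_two_pow_le {K s c : ℕ} (h : 2 ^ K ≤ s * c)
    (hc : (c : ℝ) ≤ Real.exp (Real.log 2 / 2 * K)) : Real.exp (Real.log 2 / 2 * K) ≤ s := by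
  have hpos := Real.exp_pos (Real.log 2 / 2 * K)
  refine le_of_mul_le_mul_right ?_ hpos
  calc Real.exp (Real.log 2 / 2 * K) * Real.exp (Real.log 2 / 2 * K) = 2 ^ K := by
        rw [← Real.exp_add, ← add_mul, add_halves, mul_comm, Real.exp_nat_mul,
          Real.exp_log two_pos]
    _ ≤ s * c := by exact_mod_cast h
    _ ≤ s * Real.exp (Real.log 2 / 2 * K) := by gcongr

theorem topEnt_pos_of_not_orbitsConcentrateAt [CompactSpace X] (happ : ApproxProduct f)
    (hp : f p = p) (h : ¬ OrbitsConcentrateAt f p) : 0 < topEnt f := by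
  simp only [OrbitsConcentrateAt, not_forall, not_eventually, not_le] at h
  obtain ⟨c, hc, ε, hε, hfreq⟩ := h
  obtain ⟨κ, hκ, hκ1, hcard⟩ :=
    exists_forall_card_hammingDist_le_le_exp Bool (half_pos (Real.log_pos one_lt_two))
  obtain ⟨M, hM⟩ := happ (κ * (c / 4)) (c / 4) (ε / 3) (by positivity) (by positivity)
    (by positivity)
  obtain ⟨n, ⟨x, hx⟩, hnM, hnc⟩ := (hfreq.and_eventually ((eventually_gt_atTop M).and
    (tendsto_natCast_atTop_atTop.eventually_ge_atTop (4 / c)))).exists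
  rw [div_le_iff₀ hc] at hnc
  obtain ⟨L, hL_lower, hL_upper⟩ : ∃ L : ℕ, c / 4 * n ≤ L ∧ (L : ℝ) ≤ c / 2 * n :=
    ⟨⌊c / 2 * n⌋₊, by linarith [Nat.lt_floor_add_one (c / 2 * n)], Nat.floor_le (by positivity)⟩
  have hL : 0 < L := Nat.cast_pos.1 (by linarith : (0 : ℝ) < L)
  have hn : 0 < n := M.zero_le.trans_lt hnM
  refine topEnt_pos_of_exp_le_sepNum (ε := ε / 3) (N := 2 * n) (by positivity)
    (half_pos (Real.log_pos one_lt_two)) (by positivity) fun K => ?_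
  refine exp_le_of_two_pow_le (two_pow_le_sepNum_mul_card (δ := c / 4) (x := x) hp (by positivity)
    (by positivity) hL hκ1 ?_ (fun C => ?_) K) (hcard K _)
  · rw [mul_div_cancel₀ ε three_ne_zero]
    linarith
  · obtain ⟨t, ht, ht_le, z, hz⟩ := hM n hnM C
    refine ⟨t, ht, fun k => (ht_le k).trans ?_, z, hz⟩
    rw [mul_assoc]
    gcongr

end PositiveEntropy

/-! ### Invariant measures -/

section Empirical

variable {X : Type*} [MeasurableSpace X]

/-- The uniform distribution on the first `n` points of the orbit of `x` (the zero measure if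
`n = 0`). -/
noncomputable def empiricalMeasure (f : X → X) (n : ℕ) (x : X) : Measure X :=
  (n : ENNReal)⁻¹ • ∑ j ∈ Finset.range n, Measure.dirac (f^[j] x)

theorem isProbabilityMeasure_empiricalMeasure (f : X → X) {n : ℕ} (hn : 0 < n) (x : X) :
    IsProbabilityMeasure (empiricalMeasure f n x) := by
  refine ⟨?_⟩
  simp [empiricalMeasure, ENNReal.inv_mul_cancel (Nat.cast_ne_zero.2 hn.ne')]

theorem integral_empiricalMeasure [MeasurableSingletonClass X] {E : Type*} [NormedAddCommGroup E]
    [NormedSpace ℝ E] [CompleteSpace E] (f : X → X) (g : X → E) (n : ℕ) (x : X) :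
    ∫ y, g y ∂empiricalMeasure f n x = birkhoffAverage ℝ f g n x := by
  rw [empiricalMeasure, integral_smul_measure,
    integral_finsetSum_measure fun _ _ => integrable_dirac (by simp)]
  simp [birkhoffAverage, birkhoffSum]

end Empirical

theorem birkhoffAverage_comp_self (R : Type*) {X M : Type*} [DivisionSemiring R] [AddCommMonoid M]
    [Module R M] (f : X → X) (g : X → M) (n : ℕ) (x : X) :
    birkhoffAverage R f (g ∘ f) n x = birkhoffAverage R f g n (f x) := by
  simp only [birkhoffAverage, birkhoffSum, Function.comp_apply, ← Function.iterate_succ_apply,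
    Function.iterate_succ_apply']

theorem integral_birkhoffSum {X E : Type*} [MeasurableSpace X] [NormedAddCommGroup E]
    [NormedSpace ℝ E] {f : X → X} {μ : Measure X} (hf : MeasurePreserving f μ μ) {g : X → E}
    (hg : Integrable g μ) (n : ℕ) : ∫ x, birkhoffSum f g n x ∂μ = n • ∫ x, g x ∂μ := by
  have hiter : ∀ j, ∫ x, g (f^[j] x) ∂μ = ∫ x, g x ∂μ := fun j => by
    have hj := hf.iterate j
    rw [← integral_map hj.aemeasurable (by rw [hj.map_eq]; exact hg.aestronglyMeasurable),
      hj.map_eq]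
  have hint : ∀ j, Integrable (fun x => g (f^[j] x)) μ := fun j =>
    (hf.iterate j).integrable_comp_of_integrable hg
  simp only [birkhoffSum, integral_finsetSum _ fun j _ => hint j, hiter, Finset.sum_const,
    Finset.card_range]

section KrylovBogolyubov

variable {X ι : Type*} {f : X → X}

theorem tendsto_birkhoffAverage_comp_sub {E : Type*} [NormedAddCommGroup E] [NormedSpace ℝ E]
    {g : X → E} {B : ℝ} (hB : ∀ x, ‖g x‖ ≤ B) {l : Filter ι} {n : ι → ℕ} (hn : Tendsto n l atTop)
    (x : ι → X) :
    Tendsto (fun i => birkhoffAverage ℝ f (g ∘ f) (n i) (x i) - birkhoffAverage ℝ f g (n i) (x i))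
      l (𝓝 0) := by
  have hlim : Tendsto (fun i => (n i : ℝ)⁻¹ * (B + B)) l (𝓝 0) := by
    simpa using ((tendsto_inv_atTop_nhds_zero_nat (𝕜 := ℝ)).comp hn).mul_const (B + B)
  refine squeeze_zero_norm (fun i => ?_) hlim
  rw [birkhoffAverage_comp_self, birkhoffAverage_apply_sub_birkhoffAverage, norm_smul, norm_inv,
    Real.norm_natCast]
  gcongr
  exact (norm_sub_le _ _).trans (add_le_add (hB _) (hB _))

variable [TopologicalSpace X] [HasOuterApproxClosed X] [MeasurableSpace X] [BorelSpace X]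

theorem map_eq_self_of_tendsto_birkhoffAverage (hf : Continuous f) {l : Filter ι} [l.NeBot]
    {n : ι → ℕ} (hn : Tendsto n l atTop) {x : ι → X} {μ : Measure X} [IsProbabilityMeasure μ]
    (h : ∀ g : BoundedContinuousFunction X ℝ,
      Tendsto (fun i => birkhoffAverage ℝ f g (n i) (x i)) l (𝓝 (∫ y, g y ∂μ))) :
    μ.map f = μ := by
  have : IsProbabilityMeasure (μ.map f) := Measure.isProbabilityMeasure_map hf.aemeasurable
  refine ext_of_forall_integral_eq_of_IsFiniteMeasure fun g => ?_
  rw [integral_map hf.aemeasurable g.continuous.aestronglyMeasurable]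
  refine sub_eq_zero.1 (tendsto_nhds_unique ?_
    (tendsto_birkhoffAverage_comp_sub (f := f) g.norm_coe_le_norm hn x))
  exact (h (g.compContinuous ⟨f, hf⟩)).sub (h g)

theorem exists_invariant_tendsto_birkhoffAverage [CompactSpace X] [T2Space X] (hf : Continuous f)
    {U : Ultrafilter ι} {n : ι → ℕ} (hpos : ∀ i, 0 < n i) (hn : Tendsto n U atTop) (x : ι → X) :
    ∃ μ : Measure X, IsProbabilityMeasure μ ∧ μ.map f = μ ∧
      ∀ g : BoundedContinuousFunction X ℝ,
        Tendsto (fun i => birkhoffAverage ℝ f g (n i) (x i)) U (𝓝 (∫ y, g y ∂μ)) := by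
  let ν : ι → ProbabilityMeasure X := fun i =>
    ⟨empiricalMeasure f (n i) (x i), isProbabilityMeasure_empiricalMeasure f (hpos i) (x i)⟩
  obtain ⟨μ, -, hμ⟩ := isCompact_univ.ultrafilter_le_nhds (U.map ν) (by simp)
  have hlim : ∀ g : BoundedContinuousFunction X ℝ,
      Tendsto (fun i => birkhoffAverage ℝ f g (n i) (x i)) U (𝓝 (∫ y, g y ∂(μ : Measure X))) := by
    intro g
    simpa only [ν, ProbabilityMeasure.coe_mk, integral_empiricalMeasure] using
      ProbabilityMeasure.tendsto_iff_forall_integral_tendsto.1 hμ g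
  exact ⟨μ, inferInstance, map_eq_self_of_tendsto_birkhoffAverage hf hn hlim, hlim⟩

end KrylovBogolyubov

theorem farCount_mul_le_birkhoffSum {X : Type*} [PseudoMetricSpace X] (f : X → X) (p : X) (ε : ℝ)
    (n : ℕ) (x : X) : farCount (fun j => f^[j] x) (fun _ => p) ε n * ε ≤
      birkhoffSum f (fun y => dist y p) n x := by
  rw [farCount, ← nsmul_eq_mul, birkhoffSum]
  exact (Finset.card_nsmul_le_sum _ _ ε fun j hj => (Finset.mem_filter.1 hj).2.le).trans
    (Finset.sum_le_sum_of_subset_of_nonneg (Finset.filter_subset _ _) fun _ _ _ => dist_nonneg)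

section Dirac

variable {X : Type*} [MetricSpace X] [MeasurableSpace X] {f : X → X} {p : X}

theorem eq_dirac_of_forall_measure_lt_dist_eq_zero {μ : Measure X} [IsProbabilityMeasure μ]
    (h : ∀ ε : ℝ, 0 < ε → μ {y | ε < dist y p} = 0) : μ = Measure.dirac p := by
  have hnear : ∀ᵐ y ∂μ, ∀ m : ℕ, dist y p ≤ 1 / (m + 1) := ae_all_iff.2 fun m => by
    simpa only [ae_iff, not_le] using h (1 / (m + 1)) (by positivity)
  have heq : ∀ᵐ y ∂μ, id y = p := hnear.mono fun y hy =>
    dist_le_zero.1 (ge_of_tendsto' tendsto_one_div_add_atTop_nhds_zero_nat hy)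
  simpa using Measure.map_congr heq

variable [BorelSpace X]

theorem orbitsConcentrateAt_of_forall_eq_dirac [CompactSpace X] (hf : Continuous f)
    (h : ∀ μ : Measure X, IsProbabilityMeasure μ → μ.map f = μ → μ = Measure.dirac p) :
    OrbitsConcentrateAt f p := by
  intro δ hδ ε hε
  by_contra hfreq
  simp only [not_eventually, not_forall, not_le] at hfreq
  obtain ⟨n, hn_mono, hn⟩ := extraction_of_frequently_atTop
    (hfreq.and_eventually (eventually_gt_atTop 0))
  choose x hx using fun k => (hn k).1
  have hpos : ∀ k, 0 < n k := fun k => (hn k).2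
  obtain ⟨μ, hμ, hinv, hlim⟩ := exists_invariant_tendsto_birkhoffAverage hf hpos
    (hn_mono.tendsto_atTop.mono_left Nat.hyperfilter_le_atTop) x
  have hdist := hlim (BoundedContinuousFunction.mkOfCompact ⟨fun y => dist y p, by fun_prop⟩)
  rw [h μ hμ hinv, integral_dirac] at hdist
  have hbound : ∀ k, δ * ε ≤ birkhoffAverage ℝ f (fun y => dist y p) (n k) (x k) := by
    intro k
    have hk : (0 : ℝ) < n k := Nat.cast_pos.2 (hpos k)
    rw [birkhoffAverage, smul_eq_mul, ← div_eq_inv_mul, le_div_iff₀ hk, mul_right_comm]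
    exact (mul_le_mul_of_nonneg_right (hx k).le hε.le).trans
      (farCount_mul_le_birkhoffSum f p ε (n k) (x k))
  have hle : δ * ε ≤ dist p p := ge_of_tendsto' hdist hbound
  rw [dist_self] at hle
  exact hle.not_gt (by positivity)

theorem OrbitsConcentrateAt.eq_dirac (h : OrbitsConcentrateAt f p) {μ : Measure X}
    [IsProbabilityMeasure μ] (hf : MeasurePreserving f μ μ) : μ = Measure.dirac p := by
  refine eq_dirac_of_forall_measure_lt_dist_eq_zero fun ε hε => ?_
  set A : Set X := {y | ε < dist y p}
  have hA : MeasurableSet A := measurableSet_lt (by fun_prop) (by fun_prop)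
  have hsum : ∀ n x, birkhoffSum f (A.indicator 1) n x =
      (farCount (fun j => f^[j] x) (fun _ => p) ε n : ℝ) := fun n x => by
    simp [birkhoffSum, farCount, indicator_apply, A]
  have hsmall : ∀ δ : ℝ, 0 < δ → μ.real A ≤ δ := by
    intro δ hδ
    obtain ⟨n, hn, hn0⟩ := ((h δ hδ ε hε).and (eventually_gt_atTop 0)).exists
    have hmean : n * μ.real A ≤ n * δ := calc
      n * μ.real A = ∫ x, birkhoffSum f (A.indicator 1) n x ∂μ := by
        have hint : Integrable (A.indicator (1 : X → ℝ)) μ := (integrable_const 1).indicator hA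
        rw [integral_birkhoffSum hf hint, integral_indicator_one hA, nsmul_eq_mul]
      _ ≤ ∫ _, δ * n ∂μ := by
        simp only [hsum]
        exact integral_mono_of_nonneg (.of_forall fun _ => Nat.cast_nonneg _)
          (integrable_const _) (.of_forall hn)
      _ = n * δ := by rw [integral_const, probReal_univ, one_smul, mul_comm]
    exact le_of_mul_le_mul_left hmean (Nat.cast_pos.2 hn0)
  exact (measureReal_eq_zero_iff).1
    (le_antisymm (le_of_forall_gt_imp_ge_of_dense hsmall) measureReal_nonneg)

end Dirac

/-- **Proposition 5.1 (Sun).** Suppose the compact system `(X, f)` has a fixed point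
`p`. Then `(X, f)` has the approximate product property and zero topological entropy
if and only if the Dirac measure `δ_p` is the unique `f`-invariant Borel probability
measure on `X`. -/
theorem app_zero_entropy_iff_dirac_uniquelyErgodic_of_fixed_point
    {X : Type*} [MetricSpace X] [CompactSpace X] [MeasurableSpace X] [BorelSpace X]
    (f : X → X) (hf : Continuous f) (p : X) (hp : f p = p) :
    (ApproxProduct f ∧ topEnt f = 0) ↔
      (∀ μ : Measure X,
        (IsProbabilityMeasure μ ∧ Measure.map f μ = μ) ↔ μ = Measure.dirac p) := by
  constructor
  · rintro ⟨happ, hent⟩ μ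
    have hconc : OrbitsConcentrateAt f p := by
      by_contra hnot
      exact (topEnt_pos_of_not_orbitsConcentrateAt happ hp hnot).ne' hent
    constructor
    · rintro ⟨hμ, hinv⟩
      exact hconc.eq_dirac ⟨hf.measurable, hinv⟩
    · rintro rfl
      exact ⟨inferInstance, by rw [Measure.map_dirac' hf.measurable, hp]⟩
  · intro hunique
    have hconc : OrbitsConcentrateAt f p :=
      orbitsConcentrateAt_of_forall_eq_dirac hf fun μ hμ hinv => (hunique μ).1 ⟨hμ, hinv⟩
    exact ⟨hconc.approxProduct hp, hconc.topEnt_eq_zero⟩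

end Defs
end

section
/- Let (X,d) be a compact metric space, f : X → X a continuous map, and N a positive integer. If the system (X, f^N) has the approximate product property, then so does (X, f). -/
open MeasureTheory Filter Set

section Defs

variable {X : Type*} [MetricSpace X]

/-!
Write `q = n / N + 1`, so that `n < N * q ≤ n + N`. A point tracing the segments of length `q`
under `f^[N]` also traces the segments of length `n` under `f`: by uniform continuity of the
iterates `f^[i]`, `i < N`, a mistake of `f` at time `j` forces a mistake of `f^[N]` at time `j / N`,
so there are at most `N` times as many of them. The rounding `N * q - n ≤ N` is absorbed into the
gaps, which stay small relative to `n` once `n` is large.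
-/

section Mistakes

variable {α : Type*} [PseudoMetricSpace α] {f : α → α}

theorem exists_pos_forall_dist_iterate_le_of_uniformContinuous (hf : UniformContinuous f) (N : ℕ)
    {ε : ℝ} (hε : 0 < ε) :
    ∃ η > 0, ∀ i < N, ∀ x y, dist x y ≤ η → dist (f^[i] x) (f^[i] y) ≤ ε := by
  have hequi : UniformEquicontinuous fun i : Fin N => f^[i] :=
    uniformEquicontinuous_finite.2 fun i => hf.iterate f i
  obtain ⟨η, hη, hdist⟩ := Metric.uniformEquicontinuous_iff.1 hequi ε hε
  exact ⟨η / 2, half_pos hη, fun i hi x y hxy =>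
    (hdist x y (hxy.trans_lt (half_lt_self hη)) ⟨i, hi⟩).le⟩

/-- The times `j < n` at which the orbits of `x` and `y` under `f` are more than `ε` apart. These
are the exceptional times that `Traced` counts, with `x` the tracing point moved to the start of
the segment. -/
noncomputable def mistakes (f : α → α) (x y : α) (n : ℕ) (ε : ℝ) : Finset ℕ :=
  (Finset.range n).filter fun j => ε < dist (f^[j] x) (f^[j] y)

theorem mem_mistakes {x y : α} {n j : ℕ} {ε : ℝ} :
    j ∈ mistakes f x y n ε ↔ j < n ∧ ε < dist (f^[j] x) (f^[j] y) := by
  simp only [mistakes, Finset.mem_filter, Finset.mem_range]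

variable {N n q : ℕ} {ε η : ℝ}

theorem div_mem_mistakes_iterate
    (hmod : ∀ i < N, ∀ x y, dist x y ≤ η → dist (f^[i] x) (f^[i] y) ≤ ε) (hn : n ≤ N * q)
    {x y : α} {j : ℕ} (hj : j ∈ mistakes f x y n ε) :
    j / N ∈ mistakes f^[N] x y q η := by
  obtain ⟨hjn, hfar⟩ := mem_mistakes.1 hj
  have hjq : j < N * q := hjn.trans_le hn
  have hN : 0 < N := Nat.pos_of_mul_pos_right (Nat.zero_lt_of_lt hjq)
  have iterate_eq (w : α) : f^[j % N] ((f^[N])^[j / N] w) = f^[j] w := by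
    rw [← Function.iterate_mul, ← Function.iterate_add_apply, Nat.mod_add_div]
  refine mem_mistakes.2 ⟨Nat.div_lt_of_lt_mul hjq, ?_⟩
  by_contra! hclose
  have hnear := hmod (j % N) (Nat.mod_lt j hN) _ _ hclose
  rw [iterate_eq, iterate_eq] at hnear
  exact hfar.not_ge hnear

theorem card_mistakes_le_mul_card_mistakes_iterate
    (hmod : ∀ i < N, ∀ x y, dist x y ≤ η → dist (f^[i] x) (f^[i] y) ≤ ε) (hn : n ≤ N * q)
    (x y : α) :
    (mistakes f x y n ε).card ≤ N * (mistakes f^[N] x y q η).card := by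
  refine Finset.card_le_mul_card_image_of_maps_to (f := (· / N))
    (fun j hj => div_mem_mistakes_iterate hmod hn hj) N fun b _ => ?_
  have hblock : (mistakes f x y n ε).filter (· / N = b) ⊆ Finset.Ico (N * b) (N * b + N) := by
    intro j hj
    obtain ⟨hmem, rfl⟩ := Finset.mem_filter.1 hj
    have hN : 0 < N :=
      Nat.pos_of_mul_pos_right (Nat.zero_lt_of_lt ((mem_mistakes.1 hmem).1.trans_le hn))
    exact Finset.mem_Ico.2 ⟨Nat.mul_div_le j N, Nat.lt_mul_div_succ j hN⟩
  simpa only [Nat.card_Ico, Nat.add_sub_cancel_left] using Finset.card_le_card hblock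

end Mistakes

section Tracing

variable {f : X → X} {C : ℕ → X} {m t : ℕ → ℕ} {δ ε : ℝ} {z : X}

theorem traced_iff_card_mistakes_le :
    Traced f C m t δ ε z ↔
      ∀ k, ((mistakes f (f^[segStart m t k] z) (C k) (m k) ε).card : ℝ) ≤ δ * m k := by
  simp only [Traced, mistakes, ← Function.iterate_add_apply, Nat.add_comm]

theorem segStart_eq_mul_segStart {m' t' : ℕ → ℕ} {N : ℕ}
    (hstep : ∀ i, m i + t i - 1 = N * (m' i + t' i - 1)) (k : ℕ) :
    segStart m t k = N * segStart m' t' k := by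
  simp only [segStart, hstep, Finset.mul_sum]

theorem Traced.of_iterate {N : ℕ} {m' t' : ℕ → ℕ} {δ' η : ℝ}
    (htraced : Traced f^[N] C m' t' δ' η z)
    (hmod : ∀ i < N, ∀ x y, dist x y ≤ η → dist (f^[i] x) (f^[i] y) ≤ ε)
    (hm : ∀ k, m k ≤ N * m' k) (hstep : ∀ k, m k + t k - 1 = N * (m' k + t' k - 1))
    (hδ : ∀ k, δ' * (N * m' k) ≤ δ * m k) :
    Traced f C m t δ ε z := by
  refine traced_iff_card_mistakes_le.2 fun k => ?_
  have hcard := traced_iff_card_mistakes_le.1 htraced k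
  rw [segStart_eq_mul_segStart hstep, Function.iterate_mul]
  set x := (f^[N])^[segStart m' t' k] z
  calc ((mistakes f x (C k) (m k) ε).card : ℝ)
      ≤ N * (mistakes f^[N] x (C k) (m' k) η).card := mod_cast
        card_mistakes_le_mul_card_mistakes_iterate hmod (hm k) x (C k)
    _ ≤ N * (δ' * m' k) := by gcongr
    _ = δ' * (N * m' k) := by ring
    _ ≤ δ * m k := hδ k

end Tracing

section StretchedGap

/-- If `f^[N]` waits for a gap `t` after a segment of length `q`, this is the gap for `f` after a
segment of length `n` that makes the next segments of both start at the same time, `N * (q + t - 1)`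
steps of `f` later. The subtractions are not truncated when `n ≤ N * q` and `0 < t`. -/
def stretchedGap (N n q t : ℕ) : ℕ :=
  N * (q + t - 1) - n + 1

variable {N n q t : ℕ}

theorem le_mul_add_sub_one (hn : n ≤ N * q) (ht : 0 < t) : n ≤ N * (q + t - 1) :=
  hn.trans (Nat.mul_le_mul_left N (by lia))

theorem add_stretchedGap_sub_one (hn : n ≤ N * q) (ht : 0 < t) :
    n + stretchedGap N n q t - 1 = N * (q + t - 1) := by
  have := le_mul_add_sub_one hn ht
  simp only [stretchedGap]
  lia

theorem cast_stretchedGap (hn : n ≤ N * q) (ht : 0 < t) :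
    (stretchedGap N n q t : ℝ) = 1 + (N * q - n) + N * (t - 1) := by
  rw [stretchedGap, Nat.cast_add_one, Nat.cast_sub (le_mul_add_sub_one hn ht), Nat.cast_mul,
    Nat.cast_sub (by lia)]
  push_cast
  ring

theorem stretchedGap_le_one_add_mul {δ : ℝ} (hn : n ≤ N * q) (ht : 0 < t) (hδ : 0 ≤ δ)
    (hq : (N * q : ℝ) ≤ n + N) (htq : (t : ℝ) ≤ 1 + δ / 2 * q) (hlarge : 2 * N + δ * N ≤ δ * n) :
    (stretchedGap N n q t : ℝ) ≤ 1 + δ * n := by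
  calc (stretchedGap N n q t : ℝ)
      = 1 + (N * q - n) + N * (t - 1) := cast_stretchedGap hn ht
    _ ≤ 1 + N + N * (δ / 2 * q) := by gcongr <;> linarith
    _ = 1 + N + δ / 2 * (N * q) := by ring
    _ ≤ 1 + N + δ / 2 * (n + N) := by gcongr
    _ ≤ 1 + δ * n := by linarith

end StretchedGap

theorem exists_forall_lt_le_and_two_mul_add_mul_le {δ : ℝ} (hδ : 0 < δ) (N : ℕ) :
    ∃ K : ℕ, ∀ n : ℕ, K < n → N ≤ n ∧ 2 * N + δ * N ≤ δ * n := by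
  obtain ⟨K, hK⟩ := exists_nat_ge (2 * N / δ + N : ℝ)
  refine ⟨K, fun n hn => ?_⟩
  have hlarge : 2 * N / δ + N ≤ (n : ℝ) := hK.trans (mod_cast hn.le)
  have hquot : (0 : ℝ) ≤ 2 * N / δ := by positivity
  refine ⟨by exact_mod_cast (le_add_of_nonneg_left hquot).trans hlarge, ?_⟩
  calc 2 * N + δ * N = δ * (2 * N / δ + N) := by field_simp
    _ ≤ δ * n := by gcongr

theorem app_of_app_iterate_general {f : X → X} (hf : UniformContinuous f) {N : ℕ} (hN : 0 < N)
    (happ : ApproxProduct f^[N]) : ApproxProduct f := by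
  intro δ₁ δ₂ ε hδ₁ hδ₂ hε
  obtain ⟨η, hη, hmod⟩ := exists_pos_forall_dist_iterate_le_of_uniformContinuous hf N hε
  obtain ⟨M, hM⟩ := happ (δ₁ / 2) (δ₂ / 2) η (half_pos hδ₁) (half_pos hδ₂) hη
  obtain ⟨K, hK⟩ := exists_forall_lt_le_and_two_mul_add_mul_le hδ₁ N
  refine ⟨max K (N * M), fun n hn C => ?_⟩
  obtain ⟨hKn, hMn⟩ := max_lt_iff.1 hn
  obtain ⟨hNn, hlarge⟩ := hK n hKn
  have hMq : M < n / N + 1 :=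
    Nat.lt_succ_of_le ((Nat.le_div_iff_mul_le hN).2 (Nat.mul_comm N M ▸ hMn.le))
  have hnq : n ≤ N * (n / N + 1) := (Nat.lt_mul_div_succ n hN).le
  have hqn : (N * (n / N + 1 : ℕ) : ℝ) ≤ n + N := by
    exact_mod_cast Nat.add_le_add_right (Nat.mul_div_le n N) N
  obtain ⟨t, ht, htq, z, hz⟩ := hM (n / N + 1) hMq C
  refine ⟨fun k => stretchedGap N n (n / N + 1) (t k), fun k => Nat.succ_pos _,
    fun k => stretchedGap_le_one_add_mul hnq (ht k) hδ₁.le hqn (htq k) hlarge, z,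
    hz.of_iterate hmod (fun _ => hnq) (fun k => add_stretchedGap_sub_one hnq (ht k)) fun _ => ?_⟩
  calc δ₂ / 2 * (N * (n / N + 1 : ℕ)) ≤ δ₂ / 2 * (n + n) := by gcongr; exact hqn.trans (by gcongr)
    _ = δ₂ * n := by ring

/-- **Proposition 5.3 (Sun).** If `(X, f^N)` has the approximate product property for
some positive integer `N`, then so does `(X, f)`. -/
theorem app_of_app_iterate
    {X : Type*} [MetricSpace X] [CompactSpace X]
    (f : X → X) (hf : Continuous f) (N : ℕ) (hN : 0 < N)
    (happ : ApproxProduct (f^[N])) :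
    ApproxProduct f :=
  app_of_app_iterate_general (CompactSpace.uniformContinuous_of_continuous hf) hN happ

end Defs
end

section
/- Let I = [a,b] be a compact interval of real numbers and f : I → I a continuous map. Suppose p ∈ I is a fixed point of f (f(p) = p) and f has no other periodic points, i.e. for every x ∈ I and every positive integer n, f^n(x) = x implies x = p. Then p is attracting: for every x ∈ I, f^n(x) → p as n → ∞. -/
open MeasureTheory Filter Set

/-!
Every iterate `f^[n]`, `0 < n`, has `p` as its only fixed point, so by the intermediate value
theorem it pushes points below `p` up and points above `p` down. Hence the terms `≤ p` of an orbit
increase and the terms `≥ p` decrease; let `y` and `z` be the limits of these two subsequences. If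
the orbit visits both sides infinitely often, then it crosses `p` infinitely often in either
direction, so `f y = z` and `f z = y`; both are then periodic, whence `y = z = p`. Otherwise the
orbit is eventually monotone and its limit is a fixed point, which is `p`.
-/

open Function Topology

theorem frequently_and_succ_of_frequently {P Q : ℕ → Prop} (hPQ : ∀ n, P n ∨ Q n)
    (hP : ∃ᶠ n in atTop, P n) (hQ : ∃ᶠ n in atTop, Q n) :
    ∃ᶠ n in atTop, P n ∧ Q (n + 1) := by
  by_contra hcross
  obtain ⟨N, hN⟩ := eventually_atTop.mp (not_frequently.mp hcross)
  obtain ⟨n, hNn, hPn⟩ := frequently_atTop.mp hP N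
  have hP_of_ge : ∀ m ≥ n, P m := fun m hm ↦ by
    induction m, hm using Nat.le_induction with
    | base => exact hPn
    | succ m hm ih => exact (hPQ (m + 1)).resolve_right fun hQm ↦ hN m (hNn.trans hm) ⟨ih, hQm⟩
  obtain ⟨m, hm, hQm⟩ := frequently_atTop'.mp hQ n
  obtain ⟨k, rfl⟩ := Nat.exists_eq_succ_of_ne_zero (Nat.ne_zero_of_lt hm)
  have hk : n ≤ k := Nat.lt_succ_iff.mp hm
  exact hN k (hNn.trans hk) ⟨hP_of_ge k hk, hQm⟩

theorem tendsto_atTop_inf_principal_of_monotoneOn_isLUB {ι α : Type*} [Preorder ι]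
    [LinearOrder α] [TopologicalSpace α] [OrderTopology α] {u : ι → α} {s : Set ι} {y : α}
    (hu : MonotoneOn u s) (hy : IsLUB (u '' s) y) : Tendsto u (atTop ⊓ 𝓟 s) (𝓝 y) := by
  refine tendsto_order.mpr ⟨fun c hc ↦ ?_, fun c hc ↦ ?_⟩ <;> rw [eventually_inf_principal]
  · obtain ⟨_, ⟨i, hi, rfl⟩, hci, -⟩ := hy.exists_between hc
    filter_upwards [eventually_ge_atTop i] with j hij hj using hci.trans_le (hu hi hj hij)
  · exact .of_forall fun j hj ↦ (hy.1 (mem_image_of_mem u hj)).trans_lt hc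

theorem tendsto_atTop_inf_principal_of_antitoneOn_isGLB {ι α : Type*} [Preorder ι]
    [LinearOrder α] [TopologicalSpace α] [OrderTopology α] {u : ι → α} {s : Set ι} {z : α}
    (hu : AntitoneOn u s) (hz : IsGLB (u '' s) z) : Tendsto u (atTop ⊓ 𝓟 s) (𝓝 z) :=
  tendsto_atTop_inf_principal_of_monotoneOn_isLUB (α := αᵒᵈ) hu hz

section T2Space

variable {X : Type*} [TopologicalSpace X] [T2Space X] {f : X → X} {p x y z : X} {s t : Set ℕ}

theorem map_eq_of_tendsto_iterate_of_frequently (hf : ContinuousAt f y)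
    (hy : Tendsto (fun n ↦ f^[n] x) (atTop ⊓ 𝓟 s) (𝓝 y))
    (hz : Tendsto (fun n ↦ f^[n] x) (atTop ⊓ 𝓟 t) (𝓝 z))
    (hst : ∃ᶠ n in atTop, n ∈ s ∧ n + 1 ∈ t) : f y = z := by
  let c : Set ℕ := {n | n ∈ s ∧ n + 1 ∈ t}
  have : NeBot (atTop ⊓ 𝓟 c) := frequently_mem_iff_neBot.mp hst
  have hc : Tendsto id (atTop ⊓ 𝓟 c) (atTop ⊓ 𝓟 s) :=
    tendsto_id.inf (tendsto_principal_principal.mpr fun _ hn ↦ hn.1)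
  have hc_succ : Tendsto (· + 1) (atTop ⊓ 𝓟 c) (atTop ⊓ 𝓟 t) :=
    (tendsto_add_atTop_nat 1).inf (tendsto_principal_principal.mpr fun _ hn ↦ hn.2)
  refine tendsto_nhds_unique (hf.tendsto.comp (hy.comp hc)) ((hz.comp hc_succ).congr fun n ↦ ?_)
  exact iterate_succ_apply' f n x

theorem tendsto_iterate_of_fixedPoints_subset_of_mem_atTop (hf : Continuous f)
    (hfix : fixedPoints f ⊆ {p}) (hs : s ∈ atTop)
    (hy : Tendsto (fun n ↦ f^[n] x) (atTop ⊓ 𝓟 s) (𝓝 y)) :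
    Tendsto (fun n ↦ f^[n] x) atTop (𝓝 p) := by
  rw [inf_eq_left.mpr (le_principal_iff.mpr hs)] at hy
  have hyp : y = p := hfix (isFixedPt_of_tendsto_iterate hy hf.continuousAt)
  exact hyp ▸ hy

theorem tendsto_iterate_of_periodicPts_subset_of_union_eq_univ (hf : Continuous f)
    (hper : periodicPts f ⊆ {p}) (hst : s ∪ t = univ)
    (hy : Tendsto (fun n ↦ f^[n] x) (atTop ⊓ 𝓟 s) (𝓝 y))
    (hz : Tendsto (fun n ↦ f^[n] x) (atTop ⊓ 𝓟 t) (𝓝 z)) :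
    Tendsto (fun n ↦ f^[n] x) atTop (𝓝 p) := by
  have hcover : ∀ n, n ∈ s ∨ n ∈ t := eq_univ_iff_forall.mp hst
  have hfix : fixedPoints f ⊆ {p} := fun w hw ↦ hper (mk_mem_periodicPts one_pos hw)
  by_cases hs : ∃ᶠ n in atTop, n ∈ s
  swap
  · exact tendsto_iterate_of_fixedPoints_subset_of_mem_atTop hf hfix
      ((not_frequently.mp hs).mono fun n ↦ (hcover n).resolve_left) hz
  by_cases ht : ∃ᶠ n in atTop, n ∈ t
  swap
  · exact tendsto_iterate_of_fixedPoints_subset_of_mem_atTop hf hfix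
      ((not_frequently.mp ht).mono fun n ↦ (hcover n).resolve_right) hy
  have hyz : f y = z := map_eq_of_tendsto_iterate_of_frequently hf.continuousAt hy hz
    (frequently_and_succ_of_frequently hcover hs ht)
  have hzy : f z = y := map_eq_of_tendsto_iterate_of_frequently hf.continuousAt hz hy
    (frequently_and_succ_of_frequently (fun n ↦ (hcover n).symm) ht hs)
  have hyp : y = p := hper (mk_mem_periodicPts two_pos (show f (f y) = y by rw [hyz, hzy]))
  have hzp : z = p := hper (mk_mem_periodicPts two_pos (show f (f z) = z by rw [hzy, hyz]))
  rw [← inf_top_eq atTop, ← principal_univ, ← hst, ← sup_principal, inf_sup_left]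
  exact (hyp ▸ hy).sup (hzp ▸ hz)

end T2Space

theorem lt_map_of_forall_le_not_isFixedPt {α : Type*} [ConditionallyCompleteLinearOrder α]
    [OrderBot α] [DenselyOrdered α] [TopologicalSpace α] [OrderTopology α] {g : α → α} {x : α}
    (hg : ContinuousOn g (Iic x)) (hfix : ∀ y ≤ x, ¬ IsFixedPt g y) : x < g x := by
  by_contra! hgx
  obtain ⟨y, hy, hgy⟩ :=
    exists_mem_Icc_isFixedPt (hg.mono Icc_subset_Iic_self) bot_le bot_le hgx
  exact hfix y hy.2 hgy

section CompleteLinearOrder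

variable {α : Type*} [CompleteLinearOrder α] [DenselyOrdered α] [TopologicalSpace α]
  [OrderTopology α] {f : α → α} {p : α}

theorem monotoneOn_iterate_of_periodicPts_subset (hf : Continuous f) (hp : IsFixedPt f p)
    (hper : periodicPts f ⊆ {p}) (x : α) :
    MonotoneOn (fun n ↦ f^[n] x) {n | f^[n] x ≤ p} := by
  intro n hn m _ hnm
  obtain ⟨k, rfl⟩ := Nat.exists_eq_add_of_le' hnm
  simp only [iterate_add_apply]
  rcases k.eq_zero_or_pos with rfl | hk
  · rfl
  rcases (show f^[n] x ≤ p from hn).eq_or_lt with heq | hlt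
  · rw [heq, (hp.iterate k).eq]
  · refine (lt_map_of_forall_le_not_isFixedPt (hf.iterate k).continuousOn fun y hy hky ↦ ?_).le
    exact (hy.trans_lt hlt).ne (hper (mk_mem_periodicPts hk hky))

theorem antitoneOn_iterate_of_periodicPts_subset (hf : Continuous f) (hp : IsFixedPt f p)
    (hper : periodicPts f ⊆ {p}) (x : α) :
    AntitoneOn (fun n ↦ f^[n] x) {n | p ≤ f^[n] x} :=
  monotoneOn_iterate_of_periodicPts_subset (α := αᵒᵈ) hf hp hper x

theorem interval_unique_periodic_point_attracting_general (hf : Continuous f)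
    (hp : IsFixedPt f p) (hper : periodicPts f ⊆ {p}) (x : α) :
    Tendsto (fun n ↦ f^[n] x) atTop (𝓝 p) :=
  tendsto_iterate_of_periodicPts_subset_of_union_eq_univ hf hper
    (eq_univ_of_forall fun n ↦ le_total (f^[n] x) p)
    (tendsto_atTop_inf_principal_of_monotoneOn_isLUB
      (monotoneOn_iterate_of_periodicPts_subset hf hp hper x) (isLUB_sSup _))
    (tendsto_atTop_inf_principal_of_antitoneOn_isGLB
      (antitoneOn_iterate_of_periodicPts_subset hf hp hper x) (isGLB_sInf _))

end CompleteLinearOrder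

/-- **Proposition 5.5 (Sun).** If a continuous map of a compact interval has a fixed
point `p` and no other periodic points, then `p` is attracting: every orbit
converges to `p`. -/
theorem interval_unique_periodic_point_attracting
    (a b : ℝ) (hab : a ≤ b) (f : Set.Icc a b → Set.Icc a b) (hf : Continuous f)
    (p : Set.Icc a b) (hp : f p = p)
    (hper : ∀ (x : Set.Icc a b) (n : ℕ), 0 < n → f^[n] x = x → x = p) :
    ∀ x : Set.Icc a b, Tendsto (fun n => f^[n] x) atTop (nhds p) := by
  have : Fact (a ≤ b) := ⟨hab⟩
  exact interval_unique_periodic_point_attracting_general hf hp fun x ⟨n, hn, hx⟩ ↦ hper x n hn hx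
end

section
/- Let I = [a,b] be a compact interval of real numbers and f : I → I a continuous map. Suppose p ∈ I is a fixed point of f (f(p) = p) and f has no other periodic points, i.e. for every x ∈ I and every positive integer n, f^n(x) = x implies x = p. Then for every x ∈ I: if x < p then f^n(x) > x for every positive integer n, and if x > p then f^n(x) < x for every positive integer n. -/
open MeasureTheory Filter Set

section Defs

variable {X : Type*} [MetricSpace X]

section LinearContinuum

open Function

variable {α : Type*} [LinearOrder α] [TopologicalSpace α] [OrderClosedTopology α]
  [PreconnectedSpace α] {f : α → α} {x : α} {n : ℕ}

theorem exists_isFixedPt_le_of_map_le [OrderBot α] (hf : Continuous f) (hx : f x ≤ x) :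
    ∃ y ≤ x, IsFixedPt f y := by
  -- `min · x` maps `α` onto `Iic x`, so the intermediate value theorem on `α` applies to `Iic x`.
  have hmin : Continuous (min · x) := continuous_id.min continuous_const
  obtain ⟨z, hz⟩ : ∃ z, f (min z x) = min z x :=
    intermediate_value_univ₂ (a := x) (b := ⊥) (hf.comp hmin) hmin (by simpa using hx) (by simp)
  exact ⟨min z x, min_le_right z x, hz⟩

theorem lt_iterate_of_forall_le_notMem_periodicPts [OrderBot α] (hf : Continuous f)
    (hper : ∀ y ≤ x, y ∉ periodicPts f) (hn : 0 < n) : x < f^[n] x := by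
  by_contra! hle
  obtain ⟨y, hyx, hy⟩ := exists_isFixedPt_le_of_map_le (hf.iterate n) hle
  exact hper y hyx (mk_mem_periodicPts hn hy)

theorem iterate_lt_of_forall_ge_notMem_periodicPts [OrderTop α] (hf : Continuous f)
    (hper : ∀ y ≥ x, y ∉ periodicPts f) (hn : 0 < n) : f^[n] x < x :=
  haveI : PreconnectedSpace αᵒᵈ := ‹PreconnectedSpace α›
  lt_iterate_of_forall_le_notMem_periodicPts (α := αᵒᵈ) hf hper hn

theorem interval_unique_periodic_point_orbit_side_general [BoundedOrder α] {p : α}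
    (hf : Continuous f) (hper : periodicPts f ⊆ {p}) (x : α) (hn : 0 < n) :
    (x < p → x < f^[n] x) ∧ (p < x → f^[n] x < x) :=
  ⟨fun hxp => lt_iterate_of_forall_le_notMem_periodicPts hf
      (fun _ hyx hy => (hyx.trans_lt hxp).ne (hper hy)) hn,
    fun hpx => iterate_lt_of_forall_ge_notMem_periodicPts hf
      (fun _ hxy hy => (hpx.trans_le hxy).ne' (hper hy)) hn⟩

end LinearContinuum

/-- **Lemma 5.6 (Sun).** If a continuous map of a compact interval has a fixed point
`p` and no other periodic points, then for every `x`: if `x < p` then `f^[n] x > x`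
for every `n ≥ 1`, and if `x > p` then `f^[n] x < x` for every `n ≥ 1`. -/
theorem interval_unique_periodic_point_orbit_side
    (a b : ℝ) (hab : a ≤ b) (f : Set.Icc a b → Set.Icc a b) (hf : Continuous f)
    (p : Set.Icc a b) (hp : f p = p)
    (hper : ∀ (x : Set.Icc a b) (n : ℕ), 0 < n → f^[n] x = x → x = p) :
    ∀ (x : Set.Icc a b) (n : ℕ), 0 < n →
      (x < p → x < f^[n] x) ∧ (p < x → f^[n] x < x) := by
  intro x n hn
  have : Fact (a ≤ b) := ⟨hab⟩
  exact interval_unique_periodic_point_orbit_side_general hf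
    (fun y ⟨k, hk, hy⟩ => hper y k hk hy) x hn

end Defs
end
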